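/- Let R be an equitable ribbon with N boxes and l nonempty rows (so R has exactly N−l+1 nonempty columns). Then a partition λ lies in supp(R) if and only if λ is a partition of N with at most l nonzero parts and with largest part λ₁ at most N−l+1. -/

import Mathlib

/-- A skew shape `outer / inner`: the boxes of the Young diagram of `outer`
that are not boxes of the Young diagram of `inner`. -/
structure SkewShape where
  outer : YoungDiagram
  inner : YoungDiagram
  inner_le : inner ≤ outer

namespace SkewShape

/-- The set of boxes of a skew shape. -/
def cells (A : SkewShape) : Finset (ℕ × ℕ) := A.outer.cells \ A.inner.cells

/-- The size of a skew shape is its number of boxes. -/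
def size (A : SkewShape) : ℕ := A.cells.card

/-- The length of row `i` of a skew shape. -/
def rowLen (A : SkewShape) (i : ℕ) : ℕ := (A.cells.filter fun c => c.1 = i).card

/-- The length of column `j` of a skew shape. -/
def colLen (A : SkewShape) (j : ℕ) : ℕ := (A.cells.filter fun c => c.2 = j).card

/-- The set of indices of nonempty rows. -/
def rowSet (A : SkewShape) : Finset ℕ := A.cells.image Prod.fst

/-- The set of indices of nonempty columns. -/
def colSet (A : SkewShape) : Finset ℕ := A.cells.image Prod.snd

/-- The number of nonempty rows. -/
def numRows (A : SkewShape) : ℕ := A.rowSet.card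

/-- The number of nonempty columns. -/
def numCols (A : SkewShape) : ℕ := A.colSet.card

/-- `rows A`: the multiset of lengths of the nonempty rows of `A`
(equivalently, that sequence sorted into weakly decreasing order). -/
def rows (A : SkewShape) : Multiset ℕ := A.rowSet.val.map A.rowLen

/-- `cols A`: the multiset of lengths of the nonempty columns of `A`. -/
def cols (A : SkewShape) : Multiset ℕ := A.colSet.val.map A.colLen

/-- A skew shape is disconnected if its boxes can be split into two nonempty
parts such that no box of one part shares a row or a column with a box of the
other part. -/
def Disconnected (A : SkewShape) : Prop :=
  ∃ B C : Finset (ℕ × ℕ), B.Nonempty ∧ C.Nonempty ∧ B ∪ C = A.cells ∧ B ∩ C = ∅ ∧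
    ∀ b ∈ B, ∀ c ∈ C, b.1 ≠ c.1 ∧ b.2 ≠ c.2

/-- A skew shape is connected if it is nonempty and not disconnected. -/
def Connected (A : SkewShape) : Prop := A.cells.Nonempty ∧ ¬ A.Disconnected

/-- A ribbon is a connected skew shape containing no 2×2 block of boxes. -/
def Ribbon (A : SkewShape) : Prop :=
  A.Connected ∧ ∀ i j : ℕ, ¬ ((i, j) ∈ A.cells ∧ (i, j + 1) ∈ A.cells ∧
    (i + 1, j) ∈ A.cells ∧ (i + 1, j + 1) ∈ A.cells)

/-- The lengths of any two nonempty rows differ by at most one. -/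
def RowEquitable (A : SkewShape) : Prop :=
  ∀ i ∈ A.rowSet, ∀ i' ∈ A.rowSet, A.rowLen i ≤ A.rowLen i' + 1

/-- The lengths of any two nonempty columns differ by at most one. -/
def ColEquitable (A : SkewShape) : Prop :=
  ∀ j ∈ A.colSet, ∀ j' ∈ A.colSet, A.colLen j ≤ A.colLen j' + 1

/-- Equitable: both row equitable and column equitable. -/
def Equitable (A : SkewShape) : Prop := A.RowEquitable ∧ A.ColEquitable

/-- A filling of a skew shape is semistandard if its entries are positive
integers, weakly increasing along rows and strictly increasing down columns. -/
def IsSsyt (A : SkewShape) (T : ℕ × ℕ → ℕ) : Prop :=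
  (∀ c ∈ A.cells, 1 ≤ T c) ∧
  (∀ i j j', (i, j) ∈ A.cells → (i, j') ∈ A.cells → j ≤ j' → T (i, j) ≤ T (i, j')) ∧
  (∀ i i' j, (i, j) ∈ A.cells → (i', j) ∈ A.cells → i < i' → T (i, j) < T (i', j))

end SkewShape

/-- `c` comes weakly before `d` in the reverse reading order (right to left
along rows, rows top to bottom). -/
def ReadsBefore (c d : ℕ × ℕ) : Prop := c.1 < d.1 ∨ (c.1 = d.1 ∧ d.2 ≤ c.2)

instance : DecidableRel ReadsBefore := fun c d => by unfold ReadsBefore; infer_instance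

namespace SkewShape

/-- The number of boxes of `A` filled with the entry `k` by the filling `T`. -/
def content (A : SkewShape) (T : ℕ × ℕ → ℕ) (k : ℕ) : ℕ :=
  (A.cells.filter fun c => T c = k).card

/-- A Littlewood--Richardson filling: a semistandard filling such that every
prefix of the reverse reading word contains at least as many `k`'s as
`(k+1)`'s, for every positive `k`. -/
def IsLR (A : SkewShape) (T : ℕ × ℕ → ℕ) : Prop :=
  A.IsSsyt T ∧ ∀ d ∈ A.cells, ∀ k : ℕ,
    (A.cells.filter fun c => T c = k + 2 ∧ ReadsBefore c d).card ≤
    (A.cells.filter fun c => T c = k + 1 ∧ ReadsBefore c d).card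

end SkewShape

/-- The `i`-th largest part (0-indexed) of a multiset of natural numbers,
i.e. the `i`-th entry of the multiset sorted into weakly decreasing order. -/
def part (lam : Multiset ℕ) (i : ℕ) : ℕ := (lam.sort (· ≥ ·)).getD i 0

namespace SkewShape

/-- The support of a skew shape `A`: the set of partitions `lam` (multisets of
positive integers) for which there exists an LR filling of `A` of content `lam`. -/
def supp (A : SkewShape) : Set (Multiset ℕ) :=
  {lam | 0 ∉ lam ∧ ∃ T : ℕ × ℕ → ℕ, A.IsLR T ∧ ∀ i : ℕ, A.content T (i + 1) = part lam i}

/-- The set of LR fillings of `A` of content `lam` (normalized to vanish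
outside the boxes of `A`). -/
def LRset (A : SkewShape) (lam : Multiset ℕ) : Set ((ℕ × ℕ) → ℕ) :=
  {T | A.IsLR T ∧ (∀ c, c ∉ A.cells → T c = 0) ∧ ∀ i : ℕ, A.content T (i + 1) = part lam i}

/-- `s_A − s_B` is Schur-positive: for every partition, the number of LR
fillings of `B` of that content is at most the number for `A`. -/
def SchurPosDiff (A B : SkewShape) : Prop :=
  ∀ lam : Multiset ℕ, (B.LRset lam).ncard ≤ (A.LRset lam).ncard

end SkewShape

/-- The sum of the `k` largest parts of a multiset of natural numbers. -/
def psum (lam : Multiset ℕ) (k : ℕ) : ℕ := ((lam.sort (· ≥ ·)).take k).sum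

/-- Dominance order: `DomLe lam mu` means `lam ⊴ mu`, i.e. for every `k` the
sum of the `k` largest parts of `lam` is at most that of `mu`. -/
def DomLe (lam mu : Multiset ℕ) : Prop := ∀ k : ℕ, psum lam k ≤ psum mu k

/-- The conjugate (transpose) of a partition given as a multiset: its parts
are the numbers `#{x ∈ lam | x ≥ j}` for `j = 1, 2, …`. -/
def conj (lam : Multiset ℕ) : Multiset ℕ :=
  ((Finset.range lam.sum).val.map fun j => Multiset.card (lam.filter fun x => j + 1 ≤ x)).filter
    fun y => y ≠ 0

/-!
Walk along the ribbon from its upper right end to its lower left end and let `D k` say that the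
`k`-th step goes down. Reading a Littlewood–Richardson filling along this walk, and putting the
`k`-th box into the row given by the `k`-th entry, turns fillings of content `λ` into standard
tableaux of shape `λ` whose descents are exactly the places `k` with `D k`. The rows of the ribbon
are the runs between consecutive descents, and its columns are the runs between consecutive
ascents.

In an equitable ribbon the rows other than the first and the last all have length at least two, or
the columns do; conjugating `λ` exchanges the two cases. In the first case the tableau is built by
induction on the number of runs: the boxes of the last run are a horizontal strip that contains a
box of the last row of `λ` and must be entered by a descent. Hence the largest entry of the tableau
on the remaining runs has to lie above that row, and this is made part of the induction hypothesis.
-/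

/-! ### Conjugate sequences and descent tableaux -/

/-- `AreConjugate f g`: the sequences `f` and `g` are the row lengths and the column lengths of one
and the same diagram, that is, they are conjugate partitions. -/
def AreConjugate (f g : ℕ → ℕ) : Prop := ∀ i j, j < f i ↔ i < g j

namespace AreConjugate

variable {f g g' : ℕ → ℕ}

theorem symm (h : AreConjugate f g) : AreConjugate g f := fun i j => (h j i).symm

theorem unique (h : AreConjugate f g) (h' : AreConjugate f g') : g = g' :=
  funext fun j => eq_of_forall_lt_iff fun i => (h i j).symm.trans (h' i j)

theorem antitone (h : AreConjugate f g) : Antitone f := fun _ _ hab =>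
  le_of_forall_lt fun j hj => (h _ j).2 (hab.trans_lt ((h _ j).1 hj))

theorem exists_of_antitone (hf : Antitone f) {M : ℕ} (hM : f M = 0) : ∃ g, AreConjugate f g := by
  refine ⟨fun j => sInf {i | f i ≤ j}, fun i j => ⟨fun hj => ?_, fun hi => ?_⟩⟩
  · by_contra! hle
    have hmem : f (sInf {i | f i ≤ j}) ≤ j :=
      Nat.sInf_mem (s := {i | f i ≤ j}) ⟨M, hM.trans_le (Nat.zero_le j)⟩
    exact absurd ((hf hle).trans hmem) hj.not_ge
  · exact not_le.1 (Nat.notMem_of_lt_sInf (s := {i | f i ≤ j}) hi)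

theorem apply_eq_zero_iff (h : AreConjugate f g) {i : ℕ} : f i = 0 ↔ g 0 ≤ i := by
  have := h i 0
  omega

theorem sum_range_eq (h : AreConjugate f g) {M K : ℕ} (hM : f M = 0) (hK : g K = 0) :
    ∑ i ∈ Finset.range M, f i = ∑ j ∈ Finset.range K, g j := by
  have card_row {f g : ℕ → ℕ} (h : AreConjugate f g) {K : ℕ} (hK : g K = 0) (i : ℕ) :
      ((Finset.range K).filter fun j => j < f i).card = f i := by
    rw [← Finset.card_range (f i)]
    congr 1
    ext j
    have hf0 : f 0 ≤ K := h.symm.apply_eq_zero_iff.1 hK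
    have hfi := h.antitone i.zero_le
    simp only [Finset.mem_filter, Finset.mem_range, Finset.card_range]
    omega
  calc ∑ i ∈ Finset.range M, f i
      = ∑ i ∈ Finset.range M, ((Finset.range K).filter fun j => j < f i).card := by
        simp only [card_row h hK]
    _ = ∑ j ∈ Finset.range K, ((Finset.range M).filter fun i => j < f i).card :=
        Finset.sum_card_bipartiteAbove_eq_sum_card_bipartiteBelow fun i j => j < f i
    _ = ∑ j ∈ Finset.range K, g j := by
        simp only [h _ _, card_row h.symm hM]

theorem add_single (h : AreConjugate f g) {s : ℕ} (hs : Antitone (f + Pi.single s 1)) :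
    AreConjugate (f + Pi.single s 1) (g + Pi.single (f s) 1) := by
  have corner : g (f s) = s := by
    refine le_antisymm (not_lt.1 fun hlt => lt_irrefl _ ((h s (f s)).2 hlt)) ?_
    by_contra! hlt
    have := hs (show g (f s) ≤ s by omega)
    simp only [Pi.add_apply, Pi.single_eq_same, Pi.single_eq_of_ne hlt.ne] at this
    exact lt_irrefl _ ((h _ _).1 (Nat.lt_of_succ_le this))
  intro i j
  have hij := h i j
  simp only [Pi.add_apply, Pi.single_apply]
  split_ifs <;> subst_vars <;> omega

end AreConjugate

/-- `DescentTableau D n f t`: there is a standard Young tableau with the entries `0, …, n` and row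
lengths `f` whose largest entry `n` lies in row `t`, and in which, for every `k < n`, the entry
`k + 1` lies in a lower row than `k` exactly when `D k`. The tableau is recorded as the chain of
shapes obtained by adding its boxes one at a time. -/
inductive DescentTableau (D : ℕ → Prop) : ℕ → (ℕ → ℕ) → ℕ → Prop
  | single : DescentTableau D 0 (Pi.single 0 1) 0
  | step {n : ℕ} {f : ℕ → ℕ} {t s : ℕ} : DescentTableau D n f t → (D n ↔ t < s) →
      Antitone (f + Pi.single s 1) → DescentTableau D (n + 1) (f + Pi.single s 1) s

theorem areConjugate_single :
    AreConjugate (Pi.single 0 1) (Pi.single 0 1) := by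
  intro i j
  simp only [Pi.single_apply]
  split_ifs <;> omega

theorem count_fiber_succ (w : ℕ → ℕ) (k : ℕ) :
    (fun i => Nat.count (w · = i) (k + 1)) =
      (fun i => Nat.count (w · = i) k) + Pi.single (w k) 1 := by
  funext i
  simp only [Nat.count_succ, Pi.add_apply, Pi.single_apply, eq_comm]

theorem count_fiber_one (w : ℕ → ℕ) :
    (fun i => Nat.count (w · = i) 1) = Pi.single (w 0) 1 := by
  funext i
  simp only [Nat.count_one, Pi.single_apply, eq_comm]

namespace DescentTableau

variable {D : ℕ → Prop} {n t : ℕ} {f : ℕ → ℕ}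

theorem antitone (h : DescentTableau D n f t) : Antitone f := by
  cases h with
  | single => exact areConjugate_single.antitone
  | step _ _ hf => exact hf

theorem pos (h : DescentTableau D n f t) : 0 < f t := by
  cases h <;> simp

theorem lt_of_apply_eq_zero (h : DescentTableau D n f t) {q : ℕ} (hq : f q = 0) : t < q := by
  by_contra! hle
  have := h.antitone hle
  have := h.pos
  omega

theorem sum_range (h : DescentTableau D n f t) {M : ℕ} (hM : f M = 0) :
    ∑ i ∈ Finset.range M, f i = n + 1 := by
  have sum_single {s : ℕ} (hs : s < M) : ∑ i ∈ Finset.range M, Pi.single s 1 i = 1 := by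
    rw [Finset.sum_pi_single', if_pos (Finset.mem_range.2 hs)]
  induction h with
  | single => exact sum_single (single.lt_of_apply_eq_zero (D := D) hM)
  | step hf hD hs ih =>
    have hlt := (step hf hD hs).lt_of_apply_eq_zero hM
    simp only [Pi.add_apply, Nat.add_eq_zero_iff] at hM ⊢
    rw [Finset.sum_add_distrib, ih hM.1, sum_single hlt]

theorem apply_eq_zero [DecidablePred D] (h : DescentTableau D n f t) :
    f (Nat.count D n + 1) = 0 := by
  induction h with
  | single => simp
  | @step n f t s hf hD hs ih =>
    have hmono : Nat.count D n ≤ Nat.count D (n + 1) := Nat.count_monotone D n.le_succ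
    have hzero : f (Nat.count D (n + 1) + 1) = 0 :=
      Nat.le_zero.1 (ih ▸ hf.antitone (by omega))
    rw [Pi.add_apply, hzero, zero_add, Pi.single_apply, if_neg]
    intro hsn
    by_cases hDn : D n
    · have hprev := hs (show Nat.count D n + 1 ≤ s by simp [← hsn, Nat.count_succ, hDn])
      rw [← hsn] at hprev
      simp [Nat.count_succ, hDn, ih] at hprev
    · have hst : s ≤ t := by rwa [hD, not_lt] at hDn
      have := hf.antitone hst
      have := hf.pos
      rw [← hsn] at *
      omega

theorem transpose (h : DescentTableau D n f t) :
    ∃ g, AreConjugate f g ∧ DescentTableau (fun k => ¬ D k) n g (f t - 1) := by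
  induction h with
  | single => exact ⟨_, areConjugate_single, by simpa using single⟩
  | @step n f t s hf hD hs ih =>
    obtain ⟨g, hconj, hg⟩ := ih
    refine ⟨_, hconj.add_single hs, ?_⟩
    have hcol : (f + Pi.single s 1 : ℕ → ℕ) s - 1 = f s := by simp
    rw [hcol]
    refine hg.step ?_ (hconj.add_single hs).symm.antitone
    have hpos := hf.pos
    rw [hD, not_lt]
    refine ⟨fun hst => ?_, fun hlt => ?_⟩
    · have := hf.antitone hst
      omega
    · by_contra! hts
      have := hs hts.le
      simp only [Pi.add_apply, Pi.single_eq_same, Pi.single_eq_of_ne hts.ne] at this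
      omega

theorem exists_of_transpose {g : ℕ → ℕ} (h : DescentTableau (fun k => ¬ D k) n g t)
    (hconj : AreConjugate f g) : ∃ s, DescentTableau D n f s := by
  obtain ⟨f', hconj', hf'⟩ := h.transpose
  obtain rfl := hconj'.unique hconj.symm
  exact ⟨_, by simpa only [not_not] using hf'⟩

theorem apply_zero_le [DecidablePred D] (h : DescentTableau D n f t) :
    f 0 ≤ Nat.count (fun k => ¬ D k) n + 1 := by
  obtain ⟨g, hconj, hg⟩ := h.transpose
  exact hconj.symm.apply_eq_zero_iff.1 hg.apply_eq_zero

theorem exists_word (h : DescentTableau D n f t) :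
    ∃ w : ℕ → ℕ, w n = t ∧ (fun i => Nat.count (w · = i) (n + 1)) = f ∧
      (∀ k ≤ n, Antitone fun i => Nat.count (w · = i) (k + 1)) ∧
      ∀ k < n, (D k ↔ w k < w (k + 1)) := by
  induction h with
  | single =>
    refine ⟨fun _ => 0, rfl, count_fiber_one _, fun k hk => ?_, fun k hk => absurd hk k.not_lt_zero⟩
    obtain rfl := Nat.le_zero.1 hk
    exact count_fiber_one (fun _ => 0) ▸ areConjugate_single.antitone
  | @step n f t s hf hD hs ih =>
    obtain ⟨w, hlast, hcount, hanti, hdesc⟩ := ih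
    let w' := Function.update w (n + 1) s
    have hw' {k : ℕ} (hk : k ≤ n) : w' k = w k := Function.update_of_ne (by omega) _ _
    have hnew : w' (n + 1) = s := Function.update_self ..
    have hold {k : ℕ} (hk : k ≤ n) (i : ℕ) :
        Nat.count (w' · = i) (k + 1) = Nat.count (w · = i) (k + 1) := by
      refine le_antisymm ?_ ?_ <;> refine Nat.count_mono_left fun m hm => ?_ <;>
        rw [hw' (by omega)] <;> exact id
    have hcount' : (fun i => Nat.count (w' · = i) (n + 1 + 1)) = f + Pi.single s 1 := by
      rw [count_fiber_succ, hnew, ← hcount]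
      simp only [hold le_rfl]
    refine ⟨w', hnew, hcount', fun k hk => ?_, fun k hk => ?_⟩
    · rcases Nat.le_succ_iff.1 hk with hk | rfl
      · simpa only [hold hk] using hanti k hk
      · exact hcount' ▸ hs
    · rw [hw' (by omega)]
      rcases Nat.lt_succ_iff_lt_or_eq.1 hk with hk | rfl
      · rw [hw' hk, hdesc k hk]
      · rw [hnew, hlast, hD]

theorem of_word {w : ℕ → ℕ} (hanti : ∀ k ≤ n, Antitone fun i => Nat.count (w · = i) (k + 1))
    (hdesc : ∀ k < n, (D k ↔ w k < w (k + 1))) :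
    DescentTableau D n (fun i => Nat.count (w · = i) (n + 1)) (w n) := by
  induction n with
  | zero =>
    have hw : w 0 = 0 := by
      have := hanti 0 le_rfl (Nat.zero_le (w 0))
      by_contra hne
      simp [Nat.count_one, hne] at this
    simpa only [zero_add, count_fiber_one, hw] using single
  | succ n ih =>
    have := hanti (n + 1) le_rfl
    rw [count_fiber_succ] at this ⊢
    exact (ih (fun k hk => hanti k (by omega)) fun k hk => hdesc k (by omega)).step
      (hdesc n n.lt_succ_self) this

end DescentTableau

/-! ### Horizontal strips -/

section HorizontalStrip

/-- `IsHorizontalStrip f x`: adding `x i` boxes at the end of row `i` of the diagram with row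
lengths `f`, for every `i`, puts at most one new box into each column. -/
def IsHorizontalStrip (f x : ℕ → ℕ) : Prop := ∀ i, f (i + 1) + x (i + 1) ≤ f i

theorem IsHorizontalStrip.antitone_add {f x y : ℕ → ℕ} (h : IsHorizontalStrip f x) (hy : y ≤ x) :
    Antitone (f + y) := by
  refine antitone_nat_of_succ_le fun i => ?_
  have := h i
  have : y (i + 1) ≤ x (i + 1) := hy _
  simp only [Pi.add_apply]
  omega

theorem IsHorizontalStrip.add_left {f x y : ℕ → ℕ} (h : IsHorizontalStrip f (x + y)) :
    IsHorizontalStrip (f + x) y := fun i => by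
  have := h i
  simp only [Pi.add_apply] at *
  omega

theorem exists_last_pos {x : ℕ → ℕ} {t m : ℕ} (hx : ∀ i, t < i → x i = 0)
    (hsum : ∑ i ∈ Finset.range (t + 1), x i = m + 1) :
    ∃ s ≤ t, 0 < x s ∧ ∀ i, 0 < x i → i ≤ s := by
  obtain ⟨i, hi, hpos⟩ : ∃ i ∈ Finset.range (t + 1), 0 < x i := by
    by_contra! hzero
    simp [Finset.sum_eq_zero fun i hi => Nat.le_zero.1 (hzero i hi)] at hsum
  refine ⟨Nat.findGreatest (0 < x ·) t, Nat.findGreatest_le t,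
    Nat.findGreatest_spec (P := (0 < x ·)) (Finset.mem_range_succ_iff.1 hi) hpos,
    fun j hj => Nat.le_findGreatest ?_ hj⟩
  by_contra! hlt
  exact hj.ne' (hx j hlt)

theorem exists_eq_single_add {x : ℕ → ℕ} {s : ℕ} (hs : 0 < x s) :
    ∃ y : ℕ → ℕ, x = Pi.single s 1 + y := by
  refine ⟨x - Pi.single s 1, (add_tsub_cancel_of_le fun i => ?_).symm⟩
  rw [Pi.single_apply]
  split_ifs with hi
  · exact hi ▸ hs
  · exact Nat.zero_le _

theorem forall_le_of_pos_single_add {y : ℕ → ℕ} {s b : ℕ} (hs : b ≤ s)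
    (hy : ∀ i, 0 < y i → b ≤ i) : ∀ i, 0 < (Pi.single s 1 + y : ℕ → ℕ) i → b ≤ i := by
  intro i hi
  by_cases hne : i = s
  · exact hne ▸ hs
  · exact hy i (by simpa only [Pi.add_apply, Pi.single_eq_of_ne hne, zero_add] using hi)

namespace DescentTableau

variable {D : ℕ → Prop} {n m t : ℕ} {f x : ℕ → ℕ}

theorem add_strip (h : DescentTableau D n f t) (hstrip : IsHorizontalStrip f x)
    (hx : ∀ i, t < i → x i = 0) (hsum : ∑ i ∈ Finset.range (t + 1), x i = m)
    (hD : ∀ k, n ≤ k → k < n + m → ¬ D k) :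
    ∃ t', DescentTableau D (n + m) (f + x) t' ∧ t' ≤ t ∧ ∀ i, 0 < x i → t' ≤ i := by
  induction m generalizing n f t x with
  | zero =>
    have hzero : x = 0 := funext fun i => by
      rcases le_or_gt i t with hi | hi
      · exact Finset.sum_eq_zero_iff.1 hsum i (Finset.mem_range_succ_iff.2 hi)
      · exact hx i hi
    exact ⟨t, by simpa [hzero] using h, le_rfl, by simp [hzero]⟩
  | succ m ih =>
    obtain ⟨s, hst, hs, hlast⟩ := exists_last_pos hx hsum
    obtain ⟨y, rfl⟩ := exists_eq_single_add hs
    have hstep := h.step (s := s) (iff_of_false (hD n le_rfl (by omega)) hst.not_gt)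
      (hstrip.antitone_add le_self_add)
    have hy (i : ℕ) (hi : s < i) : y i = 0 := by
      by_contra hne
      have := hlast i (by simp only [Pi.add_apply]; omega)
      omega
    have hsum' : ∑ i ∈ Finset.range (s + 1), y i = m := by
      have : ∑ i ∈ Finset.range (t + 1), y i = m := by
        simp only [Pi.add_apply, Finset.sum_add_distrib, Finset.sum_pi_single'] at hsum
        rw [if_pos (Finset.mem_range_succ_iff.2 hst)] at hsum
        omega
      rw [← this]
      exact (Finset.eventually_constant_sum hy (Nat.succ_le_succ hst)).symm
    obtain ⟨t', ht', hle, hfirst⟩ := ih hstep hstrip.add_left hy hsum'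
      fun k hk hk' => hD k (by omega) (by omega)
    refine ⟨t', by rwa [← add_assoc f, ← Nat.add_assoc, Nat.add_right_comm], hle.trans hst,
      forall_le_of_pos_single_add hle hfirst⟩

theorem add_strip_of_descent {q : ℕ} (h : DescentTableau D n f t) (hstrip : IsHorizontalStrip f x)
    (hx : ∀ i, q < i → x i = 0) (hsum : ∑ i ∈ Finset.range (q + 1), x i = m) (hxq : 0 < x q)
    (htq : t < q) (hDn : D n) (hD : ∀ k, n < k → k < n + m → ¬ D k) :
    ∃ t', DescentTableau D (n + m) (f + x) t' ∧ t' ≤ q ∧ ∀ i, 0 < x i → t' ≤ i := by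
  obtain ⟨y, rfl⟩ := exists_eq_single_add hxq
  have hsum' : 1 + ∑ i ∈ Finset.range (q + 1), y i = m := by
    simpa only [Pi.add_apply, Finset.sum_add_distrib, Finset.sum_pi_single',
      Finset.self_mem_range_succ, if_true] using hsum
  have hstep := h.step (s := q) (iff_of_true hDn htq) (hstrip.antitone_add le_self_add)
  obtain ⟨t', ht', hle, hfirst⟩ := hstep.add_strip hstrip.add_left
    (fun i hi => (Nat.add_eq_zero_iff.1 (hx i hi)).2) rfl
    fun k hk hk' => hD k (by omega) (by omega)
  refine ⟨t', by rwa [← hsum', ← add_assoc, ← add_assoc], hle,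
    forall_le_of_pos_single_add hle hfirst⟩

end DescentTableau

theorem sum_range_tsub_of_antitone {g : ℕ → ℕ} (hg : Antitone g) (k : ℕ) :
    ∑ i ∈ Finset.range k, (g i - g (i + 1)) = g 0 - g k := by
  induction k with
  | zero => simp
  | succ k ih =>
    have : g k ≤ g 0 := hg k.zero_le
    have : g (k + 1) ≤ g k := hg k.le_succ
    rw [Finset.sum_range_succ, ih]
    omega

/-- The last row gives up `v` boxes, and the top row is cut back to length `a` together with every
other row that reaches beyond column `a`. -/
theorem exists_horizontalStrip {f : ℕ → ℕ} {q a v : ℕ} (hf : Antitone f) (hfq : f (q + 1) = 0)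
    (hq : 1 ≤ q) (hqa : f q ≤ a) (ha : a ≤ f 0) (hv : v ≤ f q) :
    ∃ m x : ℕ → ℕ, m + x = f ∧ Antitone m ∧ IsHorizontalStrip m x ∧
      ∑ i ∈ Finset.range q, x i = f 0 - a ∧ x q = v ∧ (∀ i, q < i → x i = 0) ∧
      m 0 = max (f 1) a := by
  let x : ℕ → ℕ := fun i => max (f i) a - max (f (i + 1)) a + (Pi.single q v : ℕ → ℕ) i
  have hsingle (i : ℕ) : (Pi.single q v : ℕ → ℕ) i ≤ f i := by
    rw [Pi.single_apply]
    split_ifs with hi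
    · exact hi ▸ hv
    · exact Nat.zero_le _
  have hrow (i : ℕ) : x i ≤ f i ∧ f (i + 1) ≤ f i - x i := by
    have hsucc : f (i + 1) ≤ f i := hf i.le_succ
    have hle := hsingle i
    rcases lt_trichotomy i q with hi | rfl | hi
    · have : f q ≤ f (i + 1) := hf hi
      simp only [x, Pi.single_eq_of_ne hi.ne]
      omega
    · simp only [x, Pi.single_eq_same]
      omega
    · have hfi : f i ≤ f (q + 1) := hf hi
      simp only [x, Pi.single_eq_of_ne hi.ne']
      omega
  have htop {i : ℕ} (hi : q ≤ i) : max (f i) a = a := max_eq_right ((hf hi).trans hqa)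
  refine ⟨f - x, x, tsub_add_cancel_of_le fun i => (hrow i).1,
    antitone_nat_of_succ_le fun i => (Nat.sub_le ..).trans (hrow i).2,
    fun i => ?_, ?_, ?_, fun i hi => ?_, ?_⟩
  · simp only [Pi.sub_apply, Nat.sub_add_cancel (hrow (i + 1)).1, (hrow i).2]
  · have hsum : ∑ i ∈ Finset.range q, x i =
        ∑ i ∈ Finset.range q, (max (f i) a - max (f (i + 1)) a) :=
      Finset.sum_congr rfl fun i hi => by
        simp only [x, Pi.single_eq_of_ne (Finset.mem_range.1 hi).ne, add_zero]
    rw [hsum, sum_range_tsub_of_antitone (hf.max antitone_const), htop le_rfl, max_eq_left ha]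
  · simp only [x, htop le_rfl, htop (Nat.le_succ q), Nat.sub_self, Pi.single_eq_same, zero_add]
  · simp only [x, htop hi.le, htop (hi.le.trans i.le_succ), Nat.sub_self,
      Pi.single_eq_of_ne hi.ne', add_zero]
  · have hf1 : f 1 ≤ f 0 := hf zero_le_one
    have hq0 : q ≠ 0 := by omega
    simp only [Pi.sub_apply, x, Pi.single_eq_of_ne hq0.symm, zero_add]
    omega

end HorizontalStrip

/-! ### Runs between descents -/

section Runs

theorem lt_count_iff {P : ℕ → Prop} [DecidablePred P] (hP : ∀ i j, i ≤ j → P j → P i) {k N : ℕ}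
    (hk : k < N) : k < Nat.count P N ↔ P k := by
  refine ⟨fun hlt => ?_, fun hPk => ?_⟩
  · by_contra hPk
    have hsub : (Finset.range N).filter P ⊆ Finset.range k := fun j hj => by
      rw [Finset.mem_filter] at hj
      exact Finset.mem_range.2 (lt_of_not_ge fun hkj => hPk (hP k j hkj hj.2))
    have := Finset.card_le_card hsub
    rw [← Nat.count_eq_card_filter_range, Finset.card_range] at this
    omega
  · have hfull : Nat.count P (k + 1) = k + 1 :=
      Nat.count_iff_forall.2 fun j hj => hP j k (Nat.lt_succ_iff.1 hj) hPk
    have : Nat.count P (k + 1) ≤ Nat.count P N := Nat.count_monotone P hk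
    omega

variable (D : ℕ → Prop) [DecidablePred D] (n : ℕ)

/-- The places `0, …, n` fall into runs, a new run starting after each `k < n` with `D k`.
`runLen D n i` is the length of the `i`-th run, counting from `0`. -/
def runLen (i : ℕ) : ℕ := Nat.count (fun k => Nat.count D k = i) (n + 1)

/-- The place at which the `l`-th run starts, which is the total length of the runs before it. -/
def runStart (l : ℕ) : ℕ := Nat.count (fun k => Nat.count D k < l) (n + 1)

theorem runStart_zero : runStart D n 0 = 0 := by simp [runStart]

theorem runStart_succ (l : ℕ) : runStart D n (l + 1) = runStart D n l + runLen D n l := by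
  simp only [runStart, runLen, Nat.count_eq_card_filter_range]
  rw [← Finset.card_union_of_disjoint (Finset.disjoint_filter.2 fun _ _ h => h.ne),
    ← Finset.filter_or]
  simp only [Nat.lt_succ_iff_lt_or_eq]

theorem runStart_eq_sum (l : ℕ) : runStart D n l = ∑ i ∈ Finset.range l, runLen D n i := by
  induction l with
  | zero => exact runStart_zero D n
  | succ l ih => rw [runStart_succ, ih, Finset.sum_range_succ]

variable {D n}

theorem lt_runStart_iff {k l : ℕ} (hk : k ≤ n) : k < runStart D n l ↔ Nat.count D k < l :=
  lt_count_iff (fun _ _ hij => (Nat.count_monotone D hij).trans_lt) (Nat.lt_succ_iff.2 hk)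

theorem runStart_count_succ : runStart D n (Nat.count D n + 1) = n + 1 :=
  le_antisymm (Nat.count_le _) ((lt_runStart_iff le_rfl).2 (Nat.lt_succ_self _))

theorem runStart_le {i : ℕ} (hi : i ≤ Nat.count D n) : runStart D n i ≤ n :=
  not_lt.1 fun h => hi.not_gt ((lt_runStart_iff le_rfl).1 h)

theorem exists_runStart_succ_eq {i : ℕ} (hi : i < Nat.count D n) :
    ∃ k < n, runStart D n (i + 1) = k + 1 ∧ Nat.count D k = i ∧ D k := by
  have hpos : 0 < runStart D n (i + 1) := (lt_runStart_iff n.zero_le).2 (by simp)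
  obtain ⟨k, hk⟩ := Nat.exists_eq_succ_of_ne_zero hpos.ne'
  have hkn : k + 1 ≤ n := hk.symm.trans_le (runStart_le hi)
  have hle := (lt_runStart_iff (l := i + 1) (k.le_succ.trans hkn)).1 (hk ▸ k.lt_succ_self)
  have hge := (lt_runStart_iff (l := i + 1) hkn).not.1 hk.not_gt
  rw [Nat.count_succ] at hge
  split_ifs at hge with hD
  · exact ⟨k, hkn, hk, by omega, hD⟩
  · omega

theorem count_runStart {i : ℕ} (hi : i ≤ Nat.count D n) : Nat.count D (runStart D n i) = i := by
  cases i with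
  | zero => rw [runStart_zero, Nat.count_zero]
  | succ i =>
    obtain ⟨k, -, hk, hcount, hD⟩ := exists_runStart_succ_eq hi
    rw [hk, Nat.count_succ, if_pos hD, hcount]

theorem runLen_pos {i : ℕ} (hi : i ≤ Nat.count D n) : 0 < runLen D n i := by
  have := (lt_runStart_iff (l := i + 1) (runStart_le hi)).2 (by rw [count_runStart hi]; omega)
  rw [runStart_succ] at this
  omega

theorem not_descent_of_mem_run {k l : ℕ} (hl : runStart D n l ≤ k)
    (hk : k + 1 < runStart D n (l + 1)) : ¬ D k := by
  intro hD
  have hkn : k + 1 ≤ n := Nat.lt_succ_iff.1 (hk.trans_le (Nat.count_le _))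
  have hge := (lt_runStart_iff (l := l) (k.le_succ.trans hkn)).not.1 hl.not_gt
  have hle := (lt_runStart_iff hkn).1 hk
  rw [Nat.count_succ, if_pos hD] at hle
  omega

variable (D n)

/-- The lengths of any two runs differ by at most one. -/
def EquitableRuns : Prop :=
  ∀ i ≤ Nat.count D n, ∀ j ≤ Nat.count D n, runLen D n i ≤ runLen D n j + 1

/-- Every run other than the first and the last has length at least two. -/
def LongInteriorRuns : Prop := ∀ i, 0 < i → i < Nat.count D n → 2 ≤ runLen D n i

variable {D n}

theorem LongInteriorRuns.runStart_add_two_mul_le (h : LongInteriorRuns D n) {q l : ℕ} (hq : 1 ≤ q)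
    (hql : q ≤ l) (hl : l ≤ Nat.count D n) :
    runStart D n q + 2 * (l - q) ≤ runStart D n l := by
  induction l, hql using Nat.le_induction with
  | base => simp
  | succ l hql ih =>
    have := ih (by omega)
    have := h l (by omega) hl
    rw [runStart_succ]
    omega

end Runs

/-! ### Peeling off the last run -/

section FitsRuns

variable {D : ℕ → Prop} [DecidablePred D] {n l q t : ℕ} {f : ℕ → ℕ}

theorem exists_last_row {M : ℕ} (h0 : 0 < f 0) (hM : f (M + 1) = 0) :
    ∃ q ≤ M, 0 < f q ∧ f (q + 1) = 0 := by
  have hex : ∃ q, f (q + 1) = 0 := ⟨M, hM⟩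
  refine ⟨Nat.find hex, Nat.find_min' hex hM, ?_, Nat.find_spec hex⟩
  rcases hq : Nat.find hex with _ | p
  · exact h0
  · exact Nat.pos_of_ne_zero (Nat.find_min hex (hq ▸ p.lt_succ_self))

variable (D n) in
/-- `FitsRuns D n l f`: the row lengths `f` satisfy the evident necessary conditions for the shape
of a descent tableau on the entries of the runs `0, …, l`. -/
structure FitsRuns (l : ℕ) (f : ℕ → ℕ) : Prop where
  antitone : Antitone f
  apply_eq_zero : f (l + 1) = 0
  sum_range : ∑ i ∈ Finset.range (l + 1), f i = runStart D n (l + 1)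
  apply_zero_add_le : f 0 + l ≤ runStart D n (l + 1)

namespace FitsRuns

theorem sum_range_last (h : FitsRuns D n l f) (hql : q ≤ l) (hq : f (q + 1) = 0) :
    ∑ i ∈ Finset.range (q + 1), f i = runStart D n (l + 1) := by
  rw [← h.sum_range]
  refine (Finset.eventually_constant_sum (fun i hi => ?_) (Nat.succ_le_succ hql)).symm
  exact Nat.le_zero.1 (hq ▸ h.antitone hi)

theorem apply_one_pos (h : FitsRuns D n (l + 1) f) : 0 < f 1 := by
  by_contra! hle
  have := h.sum_range_last (Nat.zero_le _) (Nat.le_zero.1 hle)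
  have := h.apply_zero_add_le
  rw [Finset.sum_range_one] at *
  omega

theorem runLen_le_apply_zero (hE : EquitableRuns D n) (hl : l ≤ Nat.count D n)
    (h : FitsRuns D n l f) : runLen D n l ≤ f 0 := by
  by_contra! hlt
  have hrow (i : ℕ) (hi : i ∈ Finset.range (l + 1)) : f i ≤ runLen D n i := by
    have := h.antitone i.zero_le
    have := hE l hl i ((Finset.mem_range_succ_iff.1 hi).trans hl)
    omega
  have hlast : f l < runLen D n l := (h.antitone l.zero_le).trans_lt hlt
  have := Finset.sum_lt_sum hrow ⟨l, Finset.self_mem_range_succ l, hlast⟩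
  rw [h.sum_range, runStart_eq_sum] at this
  exact lt_irrefl _ this

theorem apply_zero_add_apply_last_le (h : FitsRuns D n l f) (hq : 1 ≤ q) (hql : q ≤ l)
    (hpos : 0 < f q) : f 0 + f q + (q - 1) ≤ runStart D n (l + 1) := by
  obtain ⟨p, rfl⟩ := Nat.exists_eq_add_of_le' hq
  have hmid : p ≤ ∑ i ∈ Finset.range p, f (i + 1) := by
    simpa using Finset.card_nsmul_le_sum (Finset.range p) (fun i => f (i + 1)) 1 fun i hi =>
      hpos.trans_le (h.antitone (Nat.succ_le_succ (Finset.mem_range.1 hi).le))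
  have := Finset.sum_le_sum_of_subset (f := f) (Finset.range_mono (Nat.succ_le_succ hql))
  rw [h.sum_range, Finset.sum_range_succ, Finset.sum_range_succ'] at this
  omega

theorem apply_one_add_le (hE : EquitableRuns D n) (hI : LongInteriorRuns D n)
    (hl : l + 1 ≤ Nat.count D n) (h : FitsRuns D n (l + 1) f) :
    f 1 + l ≤ runStart D n (l + 1) := by
  have hfirst : runStart D n 1 = runLen D n 0 := by rw [runStart_succ, runStart_zero, zero_add]
  have hanti : f 1 ≤ f 0 := h.antitone zero_le_one
  have htwo := h.apply_zero_add_apply_last_le le_rfl (Nat.le_add_left 1 l) h.apply_one_pos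
  have hstart := hI.runStart_add_two_mul_le le_rfl (Nat.le_add_left 1 l) hl
  have := hE (l + 1) hl 0 (Nat.zero_le _)
  rw [runStart_succ] at htwo
  omega

theorem apply_last_add_le (hE : EquitableRuns D n) (hI : LongInteriorRuns D n)
    (hl : l ≤ Nat.count D n) (h : FitsRuns D n l f) (hq : 1 ≤ q) (hql : q ≤ l)
    (hzero : f (q + 1) = 0) : f q + (l - q) + runStart D n q ≤ runStart D n (l + 1) := by
  by_contra! hlt
  have hlong (i : ℕ) (hi : i ∈ Finset.range q) : runLen D n i + (l - q) ≤ f q := by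
    have hi : i ≤ Nat.count D n := by
      have := Finset.mem_range.1 hi
      omega
    have hiq := hE i hi q (hql.trans hl)
    have hil := hE i hi l hl
    have hstart := runStart_succ D n q
    rcases hql.eq_or_lt with rfl | hql
    · omega
    · have := hI.runStart_add_two_mul_le (Nat.le_add_left 1 q) hql hl
      have := hI q hq (hql.trans_le hl)
      have := runLen_pos hl
      rw [runStart_succ] at hlt
      omega
  have hsum : runStart D n q + q * (l - q) ≤ ∑ i ∈ Finset.range q, f i := by
    calc runStart D n q + q * (l - q)
        = ∑ i ∈ Finset.range q, (runLen D n i + (l - q)) := by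
          rw [Finset.sum_add_distrib, ← runStart_eq_sum, Finset.sum_const, Finset.card_range,
            smul_eq_mul]
      _ ≤ ∑ i ∈ Finset.range q, f i := Finset.sum_le_sum fun i hi =>
          (hlong i hi).trans (h.antitone (Finset.mem_range.1 hi).le)
  have := Nat.le_mul_of_pos_left (l - q) hq
  have htotal := h.sum_range_last hql hzero
  rw [Finset.sum_range_succ] at htotal
  omega

/-- `v` is the number of boxes that the last run has in the last row `q`; the run has
`runLen D n (l + 1) - v` boxes in the rows above. -/
theorem exists_lastRow_share (hE : EquitableRuns D n) (hI : LongInteriorRuns D n)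
    (hl : l + 1 ≤ Nat.count D n) (h : FitsRuns D n (l + 1) f) (hq : 1 ≤ q) (hql : q ≤ l + 1)
    (hpos : 0 < f q) (hzero : f (q + 1) = 0) :
    ∃ v, 0 < v ∧ v ≤ f q ∧ v ≤ runLen D n (l + 1) ∧
      runLen D n (l + 1) + f q ≤ f 0 + v ∧
      f 0 + v + l ≤ runStart D n (l + 1 + 1) ∧
      f q + (l + 1 - q) + runStart D n q ≤ runStart D n (l + 1) + v ∧
      (2 ≤ runLen D n (l + 1) → f q < f 0 →
        f q + (l + 1 - q) + runStart D n q < runStart D n (l + 1 + 1) →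
          v < runLen D n (l + 1)) := by
  have hf0 := h.runLen_le_apply_zero hE hl
  have hf1 := h.apply_one_add_le hE hI hl
  have hlast := h.apply_last_add_le hE hI hl hq hql hzero
  have hboth := h.apply_zero_add_apply_last_le hq hql hpos
  have htop := h.apply_zero_add_le
  have hstart := hI.runStart_add_two_mul_le hq hql hl
  have hlen := runLen_pos hl
  have hq1 : f q ≤ f 1 := h.antitone hq
  have hq0 : f q ≤ f 0 := h.antitone q.zero_le
  rw [runStart_succ D n (l + 1)] at *
  refine ⟨max 1 (max (f q + (l + 1 - q) + runStart D n q - runStart D n (l + 1))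
    (runLen D n (l + 1) + f q - f 0)), ?_⟩
  omega

theorem exists_peel (hE : EquitableRuns D n) (hI : LongInteriorRuns D n)
    (hl : l + 1 ≤ Nat.count D n) (h : FitsRuns D n (l + 1) f) (hq : 1 ≤ q) (hql : q ≤ l + 1)
    (hpos : 0 < f q) (hzero : f (q + 1) = 0) :
    ∃ m x : ℕ → ℕ, m + x = f ∧ FitsRuns D n l m ∧ IsHorizontalStrip m x ∧
      (∀ i, q < i → x i = 0) ∧ ∑ i ∈ Finset.range (q + 1), x i = runLen D n (l + 1) ∧ 0 < x q ∧
      (q = l + 1 → m q = 0) ∧ m q < m 0 ∧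
      m q + (l + 1 - q) + runStart D n q ≤ runStart D n (l + 1) ∧
      (2 ≤ runLen D n (l + 1) → f q < f 0 →
        f q + (l + 1 - q) + runStart D n q < runStart D n (l + 1 + 1) → ∃ i < q, 0 < x i) := by
  obtain ⟨v, hv, hvq, hvlen, hqa, htop, hlast, hstrict⟩ :=
    h.exists_lastRow_share hE hI hl hq hql hpos hzero
  have hf1 := h.apply_one_add_le hE hI hl
  have hf0 := h.runLen_le_apply_zero hE hl
  have hsucc := runStart_succ D n (l + 1)
  obtain ⟨m, x, rfl, hm, hstrip, hsum, rfl, hx, hm0⟩ :=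
    exists_horizontalStrip (a := f 0 + v - runLen D n (l + 1)) h.antitone hzero hq (by omega)
      (by omega) hvq
  simp only [Pi.add_apply] at *
  have hsum' : ∑ i ∈ Finset.range (q + 1), x i = runLen D n (l + 1) := by
    rw [Finset.sum_range_succ, hsum]
    omega
  have hmq : q = l + 1 → m q = 0 := by
    rintro rfl
    omega
  have hml : m (l + 1) = 0 := by
    rcases hql.eq_or_lt with rfl | hlt
    · exact hmq rfl
    · have : m (l + 1) ≤ m (q + 1) := hm hlt
      omega
  refine ⟨m, x, rfl, ⟨hm, hml, ?_, by omega⟩, hstrip, hx, hsum', hv, hmq, by omega, by omega,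
    fun hlen hne hlt => ?_⟩
  · have hxsum : ∑ i ∈ Finset.range (l + 1 + 1), x i = ∑ i ∈ Finset.range (q + 1), x i :=
      Finset.eventually_constant_sum hx (Nat.succ_le_succ hql)
    have hshape := h.sum_range
    simp only [Pi.add_apply, Finset.sum_add_distrib] at hshape
    rw [hxsum, hsum', Finset.sum_range_succ, hml] at hshape
    omega
  · by_contra! hle
    have := Finset.sum_eq_zero fun i hi => Nat.le_zero.1 (hle i (Finset.mem_range.1 hi))
    have := hstrict hlen hne hlt
    omega

end FitsRuns

/-- `FillsRuns D n l`: every shape fitting the runs `0, …, l` is the shape of a descent tableau on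
their entries. Moreover its largest entry can be put above a given row `q` below which the shape is
empty, so that the next run can descend into that row, except when the last run is a single box,
when the rows `0` and `q` are equally long, or when the row `q` is so long that the whole last run
may have to lie in it. -/
def FillsRuns (D : ℕ → Prop) [DecidablePred D] (n l : ℕ) : Prop :=
  ∀ f, FitsRuns D n l f → ∃ t, DescentTableau D (runStart D n (l + 1) - 1) f t ∧
    ∀ q, f (q + 1) = 0 → 2 ≤ runLen D n l → f q < f 0 →
      f q + (l - q) + runStart D n q < runStart D n (l + 1) → t < q

theorem fillsRuns_zero : FillsRuns D n 0 := by
  intro f h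
  refine ⟨0, ?_, fun q _ _ hlt _ => Nat.pos_of_ne_zero fun hq => lt_irrefl _ (hq ▸ hlt)⟩
  have hlen := runLen_pos (D := D) (n := n) (Nat.zero_le _)
  have hstart : runStart D n (0 + 1) = runLen D n 0 := by
    rw [runStart_succ, runStart_zero, zero_add]
  have hf0 : f 0 = runStart D n (0 + 1) := by rw [← h.sum_range, Finset.sum_range_one]
  have hfi (i : ℕ) (hi : 0 < i) : f i = 0 := Nat.le_zero.1 (h.apply_eq_zero ▸ h.antitone hi)
  obtain ⟨x, rfl⟩ := exists_eq_single_add (x := f) (s := 0) (by omega)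
  have hx (i : ℕ) (hi : 0 < i) : x i = 0 := (Nat.add_eq_zero_iff.1 (hfi i hi)).2
  have hx0 : 1 + x 0 = runStart D n (0 + 1) := by simpa using hf0
  obtain ⟨t, ht, ht0, -⟩ := DescentTableau.single.add_strip (D := D) (x := x) (m := x 0)
    (fun i => by simp [hx (i + 1) i.succ_pos]) hx (by simp) fun k _ hk =>
      not_descent_of_mem_run (n := n) (l := 0) (by simp [runStart_zero]) (by omega)
  obtain rfl := Nat.le_zero.1 ht0
  convert ht using 1
  omega

theorem FillsRuns.succ (hE : EquitableRuns D n) (hI : LongInteriorRuns D n)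
    (hl : l + 1 ≤ Nat.count D n) (ih : FillsRuns D n l) : FillsRuns D n (l + 1) := by
  intro f h
  obtain ⟨k, -, hk, -, hDk⟩ := exists_runStart_succ_eq hl
  obtain ⟨q, hql, hpos, hzero⟩ :=
    exists_last_row (h.apply_one_pos.trans_le (h.antitone zero_le_one)) h.apply_eq_zero
  have hq : 1 ≤ q := by
    by_contra! hq
    obtain rfl := Nat.lt_one_iff.1 hq
    exact h.apply_one_pos.ne' hzero
  obtain ⟨m, x, rfl, hm, hstrip, hx, hsum, hxq, hmq, hmlt, hmle, habove⟩ :=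
    h.exists_peel hE hI hl hq hql hpos hzero
  obtain ⟨t, ht, htop⟩ := ih m hm
  have htq : t < q := by
    rcases hql.eq_or_lt with rfl | hlt
    · exact ht.lt_of_apply_eq_zero (hmq rfl)
    · exact htop q (Nat.add_eq_zero_iff.1 hzero).1 (hI l (by omega) hl) hmlt (by omega)
  have hsucc := runStart_succ D n (l + 1)
  rw [hk, Nat.add_sub_cancel] at ht
  obtain ⟨t', ht', htq', hfirst⟩ := ht.add_strip_of_descent hstrip hx hsum hxq htq hDk
    fun j hj hj' => not_descent_of_mem_run (n := n) (l := l + 1) (by omega) (by omega)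
  refine ⟨t', ?_, fun p hpzero hlen hlt hstrict => ?_⟩
  · convert ht' using 1
    omega
  · rcases lt_trichotomy p q with hpq | rfl | hpq
    · have hle : (m + x) q ≤ (m + x) (p + 1) := h.antitone hpq
      omega
    · obtain ⟨i, hi, hxi⟩ := habove hlen hlt hstrict
      exact (hfirst i hxi).trans_lt hi
    · exact htq'.trans_lt hpq

theorem fillsRuns (hE : EquitableRuns D n) (hI : LongInteriorRuns D n)
    (hl : l ≤ Nat.count D n) : FillsRuns D n l := by
  induction l with
  | zero => exact fillsRuns_zero
  | succ l ih => exact (ih (by omega)).succ hE hI hl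

end FitsRuns

section Realization

variable {D : ℕ → Prop} [DecidablePred D] {n k : ℕ} {f : ℕ → ℕ}

theorem count_add_count_not (D : ℕ → Prop) [DecidablePred D] (n : ℕ) :
    Nat.count D n + Nat.count (fun k => ¬ D k) n = n := by
  simpa only [Nat.count_eq_card_filter_range, Finset.card_range] using
    Finset.card_filter_add_card_filter_not (s := Finset.range n) D

theorem three_le_runLen (hk : ¬ D k) (hk' : ¬ D (k + 1)) (hkn : k + 2 ≤ n) :
    3 ≤ runLen D n (Nat.count D k) := by
  have hsub : {k, k + 1, k + 2} ⊆
      (Finset.range (n + 1)).filter (Nat.count D · = Nat.count D k) := by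
    intro j hj
    simp only [Finset.mem_insert, Finset.mem_singleton] at hj
    rw [Finset.mem_filter, Finset.mem_range]
    rcases hj with rfl | rfl | rfl
    · exact ⟨by omega, rfl⟩
    · exact ⟨by omega, by rw [Nat.count_succ, if_neg hk, add_zero]⟩
    · exact ⟨by omega, by rw [Nat.count_succ, if_neg hk', Nat.count_succ, if_neg hk]; rfl⟩
  simpa [runLen, Nat.count_eq_card_filter_range] using Finset.card_le_card hsub

theorem longInteriorRuns_or_not (hE' : EquitableRuns (fun k => ¬ D k) n) :
    LongInteriorRuns D n ∨ LongInteriorRuns (fun k => ¬ D k) n := by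
  refine or_iff_not_imp_left.2 fun hshort => ?_
  simp only [LongInteriorRuns, not_forall, not_le] at hshort
  obtain ⟨i, hi, hin, hlen⟩ := hshort
  obtain ⟨i, rfl⟩ := Nat.exists_eq_add_one_of_ne_zero hi.ne'
  obtain ⟨k, hkn, hk, -, hDk⟩ := exists_runStart_succ_eq (D := D) (n := n) (i := i) (by omega)
  obtain ⟨k', hkn', hk', -, hDk'⟩ := exists_runStart_succ_eq hin
  have hpos := runLen_pos (D := D) (n := n) hin.le
  rw [runStart_succ] at hk'
  obtain rfl : k' = k + 1 := by omega
  intro j _ hj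
  have := three_le_runLen (D := fun k => ¬ D k) (not_not.2 hDk) (not_not.2 hDk') hkn'
  have := hE' _ (Nat.count_monotone _ hkn.le) j hj.le
  omega

theorem exists_descentTableau_of_longInteriorRuns (hE : EquitableRuns D n)
    (hI : LongInteriorRuns D n) (hf : Antitone f)
    (hsum : ∑ i ∈ Finset.range (Nat.count D n + 1), f i = n + 1)
    (hrows : f (Nat.count D n + 1) = 0) (hcols : f 0 ≤ Nat.count (fun k => ¬ D k) n + 1) :
    ∃ t, DescentTableau D n f t := by
  have hcount := count_add_count_not D n
  obtain ⟨t, ht, -⟩ := fillsRuns hE hI le_rfl f ⟨hf, hrows, by rwa [runStart_count_succ],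
    by rw [runStart_count_succ]; omega⟩
  exact ⟨t, by rwa [runStart_count_succ] at ht⟩

theorem exists_descentTableau_iff (hE : EquitableRuns D n)
    (hE' : EquitableRuns (fun k => ¬ D k) n) :
    (∃ t, DescentTableau D n f t) ↔ Antitone f ∧ f (Nat.count D n + 1) = 0 ∧
      f 0 ≤ Nat.count (fun k => ¬ D k) n + 1 ∧
      ∑ i ∈ Finset.range (Nat.count D n + 1), f i = n + 1 := by
  refine ⟨fun ⟨t, ht⟩ => ⟨ht.antitone, ht.apply_eq_zero, ht.apply_zero_le,
    ht.sum_range ht.apply_eq_zero⟩, fun ⟨hf, hrows, hcols, hsum⟩ => ?_⟩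
  rcases longInteriorRuns_or_not hE' with hI | hI
  · exact exists_descentTableau_of_longInteriorRuns hE hI hf hsum hrows hcols
  · obtain ⟨g, hconj⟩ := AreConjugate.exists_of_antitone hf hrows
    have hg : g (Nat.count (fun k => ¬ D k) n + 1) = 0 := hconj.symm.apply_eq_zero_iff.2 hcols
    obtain ⟨t, ht⟩ := exists_descentTableau_of_longInteriorRuns hE' hI hconj.symm.antitone
      ((hconj.sum_range_eq hrows hg).symm.trans hsum) hg
      (by simpa only [not_not] using hconj.apply_eq_zero_iff.1 hrows)
    exact ht.exists_of_transpose hconj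

end Realization

/-! ### The walk along a ribbon -/

section Walk

variable {D : ℕ → Prop} [DecidablePred D] {n r c a b : ℕ} {w : ℕ → ℕ}

variable (D r c) in
/-- The `k`-th box of the walk that starts at the box `(r, c)` and whose `k`-th step goes down if
`D k` and left otherwise. The column is a truncated difference, so the walk is meaningful only as
long as it has made at most `c` steps to the left. -/
def walkBox (k : ℕ) : ℕ × ℕ := (r + Nat.count D k, c - Nat.count (fun k => ¬ D k) k)

theorem image_count_range : (Finset.range (n + 1)).image (Nat.count D) =
    Finset.range (Nat.count D n + 1) := by
  ext i
  simp only [Finset.mem_image, Finset.mem_range, Nat.lt_succ_iff]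
  constructor
  · rintro ⟨k, hk, rfl⟩
    exact Nat.count_monotone D hk
  · exact fun hi => ⟨runStart D n i, runStart_le hi, count_runStart hi⟩

theorem not_of_count_eq {k : ℕ} (hab : Nat.count D a = Nat.count D b) (hak : a ≤ k) (hkb : k < b) :
    ¬ D k := by
  intro hk
  have hle : Nat.count D (k + 1) ≤ Nat.count D b := Nat.count_monotone D hkb
  have := Nat.count_monotone D hak
  rw [Nat.count_succ, if_pos hk] at hle
  omega

theorem readsBefore_walkBox_iff (hc : Nat.count (fun k => ¬ D k) n ≤ c) (ha : a ≤ n)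
    (hb : b ≤ n) : ReadsBefore (walkBox D r c a) (walkBox D r c b) ↔ a ≤ b := by
  have hrow := Nat.count_monotone D
  have hcol := Nat.count_monotone fun k => ¬ D k
  have := hcol ha
  have := hcol hb
  have := count_add_count_not D a
  have := count_add_count_not D b
  simp only [ReadsBefore, walkBox]
  rcases le_total a b with hab | hba
  · have := hrow hab
    have := hcol hab
    omega
  · have := hrow hba
    have := hcol hba
    omega

theorem injOn_walkBox (hc : Nat.count (fun k => ¬ D k) n ≤ c) :
    Set.InjOn (walkBox D r c) (Finset.range (n + 1)) := by
  intro a ha b hb hab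
  rw [Finset.mem_coe, Finset.mem_range, Nat.lt_succ_iff] at ha hb
  have hrefl (x : ℕ × ℕ) : ReadsBefore x x := Or.inr ⟨rfl, le_rfl⟩
  refine le_antisymm ((readsBefore_walkBox_iff hc ha hb (r := r)).1 ?_)
    ((readsBefore_walkBox_iff hc hb ha (r := r)).1 ?_) <;> exact hab ▸ hrefl _

theorem le_of_count_eq (hdesc : ∀ k < n, (D k ↔ w k < w (k + 1))) (hab : a ≤ b) (hbn : b ≤ n)
    (hcount : Nat.count D a = Nat.count D b) : w b ≤ w a := by
  refine antitoneOn_of_succ_le Set.ordConnected_Icc (fun k _ hk hk' => ?_)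
    (Set.left_mem_Icc.2 hab) (Set.right_mem_Icc.2 hab) hab
  exact not_lt.1 ((hdesc k (hk'.2.trans hbn)).not.1 (not_of_count_eq hcount hk.1 hk'.2))

theorem lt_of_count_not_eq (hdesc : ∀ k < n, (D k ↔ w k < w (k + 1))) (hab : a < b)
    (hbn : b ≤ n) (hcount : Nat.count (fun k => ¬ D k) a = Nat.count (fun k => ¬ D k) b) :
    w a < w b := by
  refine strictMonoOn_of_lt_succ Set.ordConnected_Icc (fun k _ hk hk' => ?_)
    (Set.left_mem_Icc.2 hab.le) (Set.right_mem_Icc.2 hab.le) hab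
  exact (hdesc k (hk'.2.trans hbn)).1 (not_not.1 (not_of_count_eq hcount hk.1 hk'.2))

end Walk

namespace SkewShape

variable {A : SkewShape}

theorem mem_cells_of_between {i j i' j' a b : ℕ} (h : (i, j) ∈ A.cells)
    (h' : (i', j') ∈ A.cells) (hia : i ≤ a) (hai : a ≤ i') (hjb : j ≤ b) (hbj : b ≤ j') :
    (a, b) ∈ A.cells := by
  simp only [cells, Finset.mem_sdiff, YoungDiagram.mem_cells] at h h' ⊢
  exact ⟨A.outer.up_left_mem hai hbj h'.1, fun hab => h.2 (A.inner.up_left_mem hia hjb hab)⟩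

/-- The index of the diagonal, running from the upper left to the lower right, through a box. -/
def diagonal (x : ℕ × ℕ) : ℤ := x.1 - x.2

namespace Ribbon

theorem not_mem_and_mem (hA : A.Ribbon) {i j i' j' : ℕ} (hi : i < i') (hj : j < j') :
    ¬ ((i, j) ∈ A.cells ∧ (i', j') ∈ A.cells) := fun ⟨h, h'⟩ =>
  hA.2 i j ⟨h, mem_cells_of_between h h' le_rfl hi.le j.le_succ hj,
    mem_cells_of_between h h' i.le_succ hi le_rfl hj.le,
    mem_cells_of_between h h' i.le_succ hi j.le_succ hj⟩

theorem diagonal_injOn (hA : A.Ribbon) : Set.InjOn diagonal A.cells := by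
  rintro ⟨i, j⟩ h ⟨i', j'⟩ h' hd
  simp only [diagonal] at hd
  rcases lt_trichotomy i i' with hi | rfl | hi
  · exact absurd ⟨h, h'⟩ (hA.not_mem_and_mem hi (by omega))
  · exact Prod.ext rfl (by omega)
  · exact absurd ⟨h', h⟩ (hA.not_mem_and_mem hi (by omega))

/-- Otherwise the boxes weakly north-east of `(i, j)` would be disconnected from the others. -/
theorem diagonal_le_of_end (hA : A.Ribbon) {i j : ℕ} (h : (i, j) ∈ A.cells)
    (hbelow : (i + 1, j) ∉ A.cells) (hleft : ∀ j', j' + 1 = j → (i, j') ∉ A.cells) {x : ℕ × ℕ}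
    (hx : x ∈ A.cells) : diagonal x ≤ diagonal (i, j) := by
  suffices h : x.1 ≤ i ∧ j ≤ x.2 by
    simp only [diagonal]
    omega
  by_contra hne
  refine hA.1.2 ⟨A.cells.filter fun x => x.1 ≤ i ∧ j ≤ x.2,
    A.cells.filter fun x => ¬ (x.1 ≤ i ∧ j ≤ x.2), ⟨(i, j), by simp [h]⟩,
    ⟨x, Finset.mem_filter.2 ⟨hx, hne⟩⟩, Finset.filter_union_filter_not_eq _ _,
    Finset.disjoint_iff_inter_eq_empty.1 (Finset.disjoint_filter_filter_not _ _ _), ?_⟩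
  rintro ⟨b₁, b₂⟩ hb ⟨c₁, c₂⟩ hc
  obtain ⟨-, hb₁, hb₂⟩ := Finset.mem_filter.1 hb
  obtain ⟨hcA, hc⟩ := Finset.mem_filter.1 hc
  constructor
  · rintro rfl
    exact hleft (j - 1) (by omega)
      (mem_cells_of_between hcA h hb₁ le_rfl (by omega) (by omega))
  · rintro rfl
    exact hbelow (mem_cells_of_between h hcA i.le_succ (by omega) le_rfl hb₂)

end Ribbon

variable (A) in
/-- The box after `x` in the walk along a ribbon from its upper right end to its lower left end. -/
def nextBox (x : ℕ × ℕ) : ℕ × ℕ :=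
  if (x.1 + 1, x.2) ∈ A.cells then (x.1 + 1, x.2) else (x.1, x.2 - 1)

theorem Ribbon.nextBox_mem (hA : A.Ribbon) {x z : ℕ × ℕ} (hx : x ∈ A.cells) (hz : z ∈ A.cells)
    (hxz : diagonal x < diagonal z) :
    A.nextBox x ∈ A.cells ∧ diagonal (A.nextBox x) = diagonal x + 1 := by
  obtain ⟨i, j⟩ := x
  unfold nextBox
  split_ifs with hbelow
  · refine ⟨hbelow, ?_⟩
    simp only [diagonal]
    omega
  · obtain ⟨j', rfl, hj'⟩ : ∃ j', j' + 1 = j ∧ (i, j') ∈ A.cells := by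
      by_contra! hleft
      exact absurd (hA.diagonal_le_of_end hx hbelow hleft hz) hxz.not_ge
    refine ⟨hj', ?_⟩
    simp only [diagonal]
    omega

theorem iterate_nextBox {D : ℕ → Prop} [DecidablePred D] {x : ℕ × ℕ}
    (hD : ∀ k, D k ↔ ((A.nextBox^[k] x).1 + 1, (A.nextBox^[k] x).2) ∈ A.cells) (k : ℕ) :
    A.nextBox^[k] x = walkBox D x.1 x.2 k := by
  induction k with
  | zero => simp [walkBox]
  | succ k ih =>
    rw [Function.iterate_succ_apply', nextBox]
    simp only [← hD, walkBox, Nat.count_succ]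
    rw [ih]
    by_cases hk : D k <;> simp [walkBox, hk, Nat.add_assoc, Nat.sub_sub]

/-- `A.IsTracedBy D n r c`: the boxes of `A` are the first `n + 1` boxes of the walk from `(r, c)`
with down steps `D`, and no left step is attempted from column `0`. -/
structure IsTracedBy (A : SkewShape) (D : ℕ → Prop) [DecidablePred D] (n r c : ℕ) : Prop where
  count_not_le : Nat.count (fun k => ¬ D k) n ≤ c
  cells_eq : A.cells = (Finset.range (n + 1)).image (walkBox D r c)

theorem Ribbon.exists_isTracedBy (hA : A.Ribbon) :
    ∃ (D : ℕ → Prop) (_ : DecidablePred D) (n r c : ℕ), A.IsTracedBy D n r c := by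
  obtain ⟨a, ha, hmin⟩ := A.cells.exists_min_image diagonal hA.1.1
  obtain ⟨z, hz, hmax⟩ := A.cells.exists_max_image diagonal hA.1.1
  obtain ⟨n, hn⟩ := Int.le.dest (hmin z hz)
  let D (k : ℕ) : Prop := ((A.nextBox^[k] a).1 + 1, (A.nextBox^[k] a).2) ∈ A.cells
  have hwalk (k : ℕ) : A.nextBox^[k] a = walkBox D a.1 a.2 k := iterate_nextBox (fun _ => Iff.rfl) k
  have hmem (k : ℕ) (hk : k ≤ n) :
      A.nextBox^[k] a ∈ A.cells ∧ diagonal (A.nextBox^[k] a) = diagonal a + k := by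
    induction k with
    | zero => simp [ha]
    | succ k ih =>
      obtain ⟨hk, hd⟩ := ih (by omega)
      rw [Function.iterate_succ_apply']
      have := hA.nextBox_mem hk hz (by omega)
      exact ⟨this.1, by omega⟩
  refine ⟨D, inferInstance, n, a.1, a.2, ?_, ?_⟩
  · have hd := (hmem n le_rfl).2
    have := count_add_count_not D n
    rw [hwalk] at hd
    simp only [walkBox, diagonal] at hd
    omega
  · ext x
    simp only [Finset.mem_image, Finset.mem_range, Nat.lt_succ_iff, ← hwalk]
    refine ⟨fun hx => ?_, fun ⟨k, hk, hkx⟩ => hkx ▸ (hmem k hk).1⟩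
    obtain ⟨k, hk⟩ := Int.le.dest (hmin x hx)
    have hkn : k ≤ n := by
      have := hmax x hx
      omega
    exact ⟨k, hkn, hA.diagonal_injOn (hmem k hkn).1 hx ((hmem k hkn).2.trans hk)⟩

end SkewShape

namespace SkewShape.IsTracedBy

variable {A : SkewShape} {D : ℕ → Prop} [DecidablePred D] {n r c : ℕ}

theorem mem_cells_iff (h : A.IsTracedBy D n r c) {x : ℕ × ℕ} :
    x ∈ A.cells ↔ ∃ k ≤ n, walkBox D r c k = x := by
  simp [h.cells_eq]

theorem walkBox_mem (h : A.IsTracedBy D n r c) {k : ℕ} (hk : k ≤ n) :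
    walkBox D r c k ∈ A.cells :=
  h.mem_cells_iff.2 ⟨k, hk, rfl⟩

section Count

variable {P : ℕ × ℕ → Prop} {Q : ℕ → Prop} [DecidablePred P] [DecidablePred Q]

theorem card_filter (h : A.IsTracedBy D n r c) (hPQ : ∀ k ≤ n, (P (walkBox D r c k) ↔ Q k)) :
    (A.cells.filter P).card = Nat.count Q (n + 1) := by
  rw [h.cells_eq, Finset.filter_image, Finset.card_image_of_injOn, Nat.count_eq_card_filter_range]
  · congr 1
    exact Finset.filter_congr fun k hk => hPQ k (Finset.mem_range_succ_iff.1 hk)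
  · exact (injOn_walkBox h.count_not_le).mono (Finset.coe_subset.2 (Finset.filter_subset _ _))

theorem card_filter_readsBefore (h : A.IsTracedBy D n r c)
    (hPQ : ∀ k ≤ n, (P (walkBox D r c k) ↔ Q k)) {a : ℕ} (ha : a ≤ n) :
    (A.cells.filter fun x => P x ∧ ReadsBefore x (walkBox D r c a)).card =
      Nat.count Q (a + 1) := by
  rw [h.card_filter (Q := fun k => Q k ∧ k ≤ a) fun k hk => and_congr (hPQ k hk)
    (readsBefore_walkBox_iff h.count_not_le hk ha)]
  simp only [Nat.count_eq_card_filter_range]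
  congr 1
  ext k
  simp only [Finset.mem_filter, Finset.mem_range, Nat.lt_succ_iff]
  exact ⟨fun hk => ⟨hk.2.2, hk.2.1⟩, fun hk => ⟨hk.1.trans ha, hk.2, hk.1⟩⟩

end Count

theorem size_eq (h : A.IsTracedBy D n r c) : A.size = n + 1 := by
  rw [size, h.cells_eq, Finset.card_image_of_injOn (injOn_walkBox h.count_not_le),
    Finset.card_range]

theorem rowSet_eq (h : A.IsTracedBy D n r c) :
    A.rowSet = (Finset.range (Nat.count D n + 1)).image (r + ·) := by
  rw [rowSet, h.cells_eq, Finset.image_image, ← image_count_range, Finset.image_image]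
  rfl

theorem colSet_eq (h : A.IsTracedBy D n r c) :
    A.colSet = (Finset.range (Nat.count (fun k => ¬ D k) n + 1)).image (c - ·) := by
  rw [colSet, h.cells_eq, Finset.image_image, ← image_count_range, Finset.image_image]
  rfl

theorem numRows_eq (h : A.IsTracedBy D n r c) : A.numRows = Nat.count D n + 1 := by
  rw [numRows, h.rowSet_eq, Finset.card_image_of_injective _ (add_right_injective r),
    Finset.card_range]

theorem numCols_eq (h : A.IsTracedBy D n r c) :
    A.numCols = Nat.count (fun k => ¬ D k) n + 1 := by
  have := h.count_not_le
  rw [numCols, h.colSet_eq, Finset.card_image_of_injOn, Finset.card_range]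
  intro i hi j hj hij
  rw [Finset.mem_coe, Finset.mem_range] at hi hj
  dsimp only at hij
  omega

theorem rowLen_eq (h : A.IsTracedBy D n r c) (i : ℕ) : A.rowLen (r + i) = runLen D n i :=
  h.card_filter fun _ _ => Nat.add_left_cancel_iff

theorem colLen_eq (h : A.IsTracedBy D n r c) {i : ℕ}
    (hi : i ≤ Nat.count (fun k => ¬ D k) n) :
    A.colLen (c - i) = runLen (fun k => ¬ D k) n i :=
  h.card_filter fun k hk => by
    have := h.count_not_le
    have : Nat.count (fun k => ¬ D k) k ≤ Nat.count (fun k => ¬ D k) n := Nat.count_monotone _ hk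
    simp only [walkBox]
    omega

theorem equitableRuns (h : A.IsTracedBy D n r c) (hA : A.RowEquitable) : EquitableRuns D n := by
  have mem_rowSet {i : ℕ} (hi : i ≤ Nat.count D n) : r + i ∈ A.rowSet :=
    h.rowSet_eq ▸ Finset.mem_image_of_mem _ (Finset.mem_range_succ_iff.2 hi)
  intro i hi j hj
  simpa only [h.rowLen_eq] using hA _ (mem_rowSet hi) _ (mem_rowSet hj)

theorem equitableRuns_not (h : A.IsTracedBy D n r c) (hA : A.ColEquitable) :
    EquitableRuns (fun k => ¬ D k) n := by
  have mem_colSet {i : ℕ} (hi : i ≤ Nat.count (fun k => ¬ D k) n) : c - i ∈ A.colSet :=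
    h.colSet_eq ▸ Finset.mem_image_of_mem (c - ·) (Finset.mem_range_succ_iff.2 hi)
  intro i hi j hj
  simpa only [h.colLen_eq, hi, hj] using hA _ (mem_colSet hi) _ (mem_colSet hj)

section Filling

variable {T : ℕ × ℕ → ℕ} {w : ℕ → ℕ}

theorem descent_iff_of_isSsyt (h : A.IsTracedBy D n r c)
    (hw : ∀ k ≤ n, T (walkBox D r c k) = w k + 1) (hT : A.IsSsyt T) {k : ℕ} (hk : k < n) :
    D k ↔ w k < w (k + 1) := by
  obtain ⟨-, hrow, hcol⟩ := hT
  have hmem := h.walkBox_mem hk.le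
  have hmem' := h.walkBox_mem (Nat.succ_le_of_lt hk)
  have hwk := hw k hk.le
  have hwk' := hw (k + 1) hk
  by_cases hD : D k
  · simp only [walkBox, Nat.count_succ, hD, not_true, if_true, if_false, add_zero]
      at hmem hmem' hwk hwk'
    have := hcol _ _ _ hmem hmem' (by omega)
    simp only [hD, true_iff]
    omega
  · simp only [walkBox, Nat.count_succ, hD, not_false_iff, if_true, if_false, add_zero]
      at hmem hmem' hwk hwk'
    have := hrow _ _ _ hmem' hmem (by omega)
    simp only [hD, false_iff]
    omega

theorem isSsyt_of_descent_iff (h : A.IsTracedBy D n r c)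
    (hw : ∀ k ≤ n, T (walkBox D r c k) = w k + 1) (hdesc : ∀ k < n, (D k ↔ w k < w (k + 1))) :
    A.IsSsyt T := by
  have hnot := h.count_not_le
  refine ⟨fun x hx => ?_, fun i j j' hx hx' hjj' => ?_, fun i i' j hx hx' hii' => ?_⟩
  · obtain ⟨k, hk, rfl⟩ := h.mem_cells_iff.1 hx
    exact hw k hk ▸ Nat.le_add_left 1 (w k)
  · obtain ⟨a, ha, hax⟩ := h.mem_cells_iff.1 hx
    obtain ⟨b, hb, hbx⟩ := h.mem_cells_iff.1 hx'
    have hba : b ≤ a := by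
      rw [← readsBefore_walkBox_iff (r := r) hnot hb ha, hax, hbx]
      exact Or.inr ⟨rfl, hjj'⟩
    have hrow := congrArg Prod.fst hax
    have hrow' := congrArg Prod.fst hbx
    simp only [walkBox] at hrow hrow'
    rw [← hax, ← hbx, hw a ha, hw b hb, Nat.add_le_add_iff_right]
    exact le_of_count_eq hdesc hba ha (by omega)
  · obtain ⟨a, ha, hax⟩ := h.mem_cells_iff.1 hx
    obtain ⟨b, hb, hbx⟩ := h.mem_cells_iff.1 hx'
    have hrow := congrArg Prod.fst hax
    have hrow' := congrArg Prod.fst hbx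
    have hcol := congrArg Prod.snd hax
    have hcol' := congrArg Prod.snd hbx
    simp only [walkBox] at hrow hrow' hcol hcol'
    have := Nat.count_monotone (fun k => ¬ D k) ha
    have := Nat.count_monotone (fun k => ¬ D k) hb
    rw [← hax, ← hbx, hw a ha, hw b hb, Nat.add_lt_add_iff_right]
    refine lt_of_count_not_eq hdesc (not_le.1 fun hba => ?_) hb (by omega)
    have := Nat.count_monotone D hba
    omega

theorem isLR_iff (h : A.IsTracedBy D n r c) (hw : ∀ k ≤ n, T (walkBox D r c k) = w k + 1) :
    A.IsLR T ↔ (∀ k ≤ n, Antitone fun i => Nat.count (w · = i) (k + 1)) ∧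
      ∀ k < n, (D k ↔ w k < w (k + 1)) := by
  have hprefix {k : ℕ} (hk : k ≤ n) (i : ℕ) :
      (A.cells.filter fun x => T x = i + 1 ∧ ReadsBefore x (walkBox D r c k)).card =
        Nat.count (w · = i) (k + 1) :=
    h.card_filter_readsBefore (fun a ha => by rw [hw a ha, Nat.add_right_cancel_iff]) hk
  rw [IsLR, and_comm]
  refine and_congr ⟨fun hlat k hk => antitone_nat_of_succ_le fun i => ?_, fun hanti x hx i => ?_⟩
    ⟨fun hT k hk => h.descent_iff_of_isSsyt hw hT hk, h.isSsyt_of_descent_iff hw⟩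
  · exact hprefix hk i ▸ hprefix hk (i + 1) ▸ hlat _ (h.walkBox_mem hk) i
  · obtain ⟨k, hk, rfl⟩ := h.mem_cells_iff.1 hx
    exact (hprefix hk i).symm ▸ (hprefix hk (i + 1)).symm ▸ hanti k hk i.le_succ

theorem content_eq (h : A.IsTracedBy D n r c) (hw : ∀ k ≤ n, T (walkBox D r c k) = w k + 1)
    (i : ℕ) : A.content T (i + 1) = Nat.count (w · = i) (n + 1) :=
  h.card_filter fun k hk => by rw [hw k hk, Nat.add_right_cancel_iff]

end Filling

theorem mem_supp_iff (h : A.IsTracedBy D n r c) {lam : Multiset ℕ} :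
    lam ∈ A.supp ↔ 0 ∉ lam ∧ ∃ t, DescentTableau D n (part lam) t := by
  refine and_congr_right fun _ => ⟨fun ⟨T, hT, hcontent⟩ => ?_, fun ⟨t, ht⟩ => ?_⟩
  · have hw : ∀ k ≤ n, T (walkBox D r c k) = T (walkBox D r c k) - 1 + 1 := fun k hk =>
      (Nat.sub_add_cancel (hT.1.1 _ (h.walkBox_mem hk))).symm
    obtain ⟨hanti, hdesc⟩ := (h.isLR_iff hw).1 hT
    have hpart : (fun i => Nat.count (fun k => T (walkBox D r c k) - 1 = i) (n + 1)) = part lam :=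
      funext fun i => (h.content_eq hw i).symm.trans (hcontent i)
    exact ⟨_, hpart ▸ DescentTableau.of_word hanti hdesc⟩
  · obtain ⟨w, -, hcount, hanti, hdesc⟩ := ht.exists_word
    obtain ⟨T, hT⟩ : ∃ T : ℕ × ℕ → ℕ, ∀ k ≤ n, T (walkBox D r c k) = w k + 1 := by
      refine ⟨fun x => w (x.1 - r + (c - x.2)) + 1, fun k hk => ?_⟩
      have := count_add_count_not D k
      have := Nat.count_monotone (fun k => ¬ D k) hk
      have := h.count_not_le
      simp only [walkBox]
      congr 2
      omega
    exact ⟨T, (h.isLR_iff hT).2 ⟨hanti, hdesc⟩,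
      fun i => (h.content_eq hT i).trans (congrFun hcount i)⟩

end SkewShape.IsTracedBy

/-! ### The parts of a partition -/

section Part

variable {lam : Multiset ℕ} {i b : ℕ}

theorem part_eq_zero_of_card_le (h : Multiset.card lam ≤ i) : part lam i = 0 :=
  List.getD_eq_default _ _ (by rwa [Multiset.length_sort])

theorem part_mem (h : i < Multiset.card lam) : part lam i ∈ lam := by
  rw [part, List.getD_eq_getElem _ _ (by rwa [Multiset.length_sort]),
    ← Multiset.mem_sort (r := (· ≥ ·))]
  exact List.getElem_mem _

theorem part_eq_zero_iff (h : 0 ∉ lam) : part lam i = 0 ↔ Multiset.card lam ≤ i :=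
  ⟨fun hi => not_lt.1 fun hlt => h (hi ▸ part_mem hlt), part_eq_zero_of_card_le⟩

theorem antitone_part : Antitone (part lam) := by
  intro i j hij
  rcases lt_or_ge j (Multiset.card lam) with hj | hj
  · have hlen : (lam.sort (· ≥ ·)).length = Multiset.card lam := Multiset.length_sort ..
    rw [part, part, List.getD_eq_getElem _ _ (by omega), List.getD_eq_getElem _ _ (by omega)]
    exact (lam.pairwise_sort (· ≥ ·)).sortedGE.antitone_get (a := ⟨i, by omega⟩)
      (b := ⟨j, by omega⟩) hij
  · exact (part_eq_zero_of_card_le hj).trans_le (Nat.zero_le _)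

theorem part_zero_le_iff : part lam 0 ≤ b ↔ ∀ x ∈ lam, x ≤ b := by
  refine ⟨fun hb x hx => ?_, fun hb => ?_⟩
  · rw [← Multiset.mem_sort (r := (· ≥ ·))] at hx
    obtain ⟨i, hi, rfl⟩ := List.getElem_of_mem hx
    rw [← List.getD_eq_getElem _ 0 hi]
    exact (antitone_part i.zero_le).trans hb
  · rcases (Multiset.card lam).eq_zero_or_pos with hzero | hpos
    · exact (part_eq_zero_of_card_le hzero.le).trans_le b.zero_le
    · exact hb _ (part_mem hpos)

theorem sum_range_part {M : ℕ} (h : Multiset.card lam ≤ M) :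
    ∑ i ∈ Finset.range M, part lam i = lam.sum := by
  have hlen : (lam.sort (· ≥ ·)).length = Multiset.card lam := Multiset.length_sort ..
  calc ∑ i ∈ Finset.range M, part lam i
      = ∑ i ∈ Finset.range (lam.sort (· ≥ ·)).length, part lam i :=
        (Finset.sum_subset (Finset.range_mono (hlen.trans_le h)) fun i _ hi =>
          part_eq_zero_of_card_le (hlen ▸ not_lt.1 (Finset.mem_range.not.1 hi))).symm
    _ = (lam.sort (· ≥ ·)).sum := by
        rw [Finset.sum_range, ← Fin.sum_univ_getElem]
        exact Finset.sum_congr rfl fun i _ => List.getD_eq_getElem _ _ i.2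
    _ = lam.sum := by rw [← Multiset.sum_coe, Multiset.sort_eq]

end Part

/-- Let `R` be an equitable ribbon with `N` boxes and `l` nonempty rows
(so `R` has exactly `N − l + 1` nonempty columns).  Then a partition `lam` lies in
`supp R` if and only if `lam` is a partition of `N` with at most `l` nonzero parts
and with largest part at most `N − l + 1`. -/
theorem support_of_equitable_ribbon (N l : ℕ) (R : SkewShape)
    (hrib : R.Ribbon) (heq : R.Equitable) (hsize : R.size = N) (hrows : R.numRows = l)
    (lam : Multiset ℕ) :
    R.numCols = N - l + 1 ∧
      (lam ∈ R.supp ↔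
        lam.sum = N ∧ 0 ∉ lam ∧ Multiset.card lam ≤ l ∧ ∀ x ∈ lam, x ≤ N - l + 1) := by
  obtain ⟨D, _, n, r, c, h⟩ := hrib.exists_isTracedBy
  have hsteps := count_add_count_not D n
  obtain rfl : N = n + 1 := hsize.symm.trans h.size_eq
  obtain rfl : l = Nat.count D n + 1 := hrows.symm.trans h.numRows_eq
  have hcols : Nat.count (fun k => ¬ D k) n + 1 = n + 1 - (Nat.count D n + 1) + 1 := by omega
  refine ⟨h.numCols_eq.trans hcols, ?_⟩
  rw [h.mem_supp_iff, exists_descentTableau_iff (h.equitableRuns heq.1)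
    (h.equitableRuns_not heq.2), hcols, part_zero_le_iff]
  constructor
  · rintro ⟨hpos, -, hcard, hle, hsum⟩
    rw [part_eq_zero_iff hpos] at hcard
    exact ⟨sum_range_part hcard ▸ hsum, hpos, hcard, hle⟩
  · rintro ⟨hsum, hpos, hcard, hle⟩
    exact ⟨hpos, antitone_part, part_eq_zero_of_card_le hcard, hle,
      (sum_range_part hcard).trans hsum⟩
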